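/- Let m ≥ 92 be an even integer. If G is a θ(1,3,3)-free graph with m edges and no isolated vertices, then ρ(G) ≤ ρ(S^-_{(m+4)/2,2}), with equality if and only if G is isomorphic to S^-_{(m+4)/2,2}. -/

import Mathlib

open Matrix SimpleGraph

open Classical in
/-- The adjacency matrix of a simple graph over `ℝ`. -/
noncomputable def adjMat {V : Type} [Fintype V] (G : SimpleGraph V) : Matrix V V ℝ :=
  fun u v => if G.Adj u v then (1 : ℝ) else 0

/-- `ρ` is the spectral radius (largest real eigenvalue) of the adjacency matrix of `G`. -/
def IsSpecRad {V : Type} [Fintype V] (G : SimpleGraph V) (ρ : ℝ) : Prop :=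
  (∃ x : V → ℝ, x ≠ 0 ∧ adjMat G *ᵥ x = ρ • x) ∧
  ∀ μ : ℝ, (∃ x : V → ℝ, x ≠ 0 ∧ adjMat G *ᵥ x = μ • x) → μ ≤ ρ

/-- `G` contains a copy of `F` as a (not necessarily induced) subgraph. -/
def ContainsSub {α β : Type} (F : SimpleGraph α) (G : SimpleGraph β) : Prop :=
  ∃ f : F →g G, Function.Injective f

/-- The theta graph `θ(1,3,3)`: vertices `0` and `1` joined by the edge `01` and the two
paths `0-2-3-1` and `0-4-5-1` of length three. -/
def theta133 : SimpleGraph (Fin 6) :=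
  SimpleGraph.fromEdgeSet {s(0,1), s(0,2), s(2,3), s(3,1), s(0,4), s(4,5), s(5,1)}

/-- The graph `S⁻_{t+2,2}`: the join of `K_2` (the two `inl` vertices) with `t` independent
vertices, with the single edge from `inl 0` to `inr 0` deleted. It has `2t` edges.
For even `m`, `SminusG (m/2)` is the graph `S⁻_{(m+4)/2, 2}` of the paper. -/
def SminusG (t : ℕ) : SimpleGraph (Fin 2 ⊕ Fin t) :=
  SimpleGraph.fromRel (fun x y =>
    match x, y with
    | Sum.inl _, Sum.inl _ => True
    | Sum.inl a, Sum.inr c => ¬(a = 0 ∧ (c : ℕ) = 0)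
    | _, _ => False)

/-!
Let `x` be a Perron vector with maximum entry `1` at `u`, and let `L` be the graph induced on the
neighbours of `u`. Expanding `ρ²` and `ρ` around `u` writes the deficit `m - ρ² + ρ` as a sum of
charges over the neighbours of `u` plus nonnegative charges over the non-neighbours. If `ρ` is at
least the spectral radius of `S⁻`, then the deficit is less than `3/2`: the Rayleigh quotient of
`(r, r, 1, 2, …, 2)`, with `r` the spectral radius of `S⁻` on its centres, gives `m - r² + r < 3/2`.

A path on five vertices in `L` would close up to a `θ(1,3,3)` through `u`, so the part of `L` left
after deleting its leaves is very restricted. When a leaf hands its charge over to its neighbour,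
only core vertices without leaves can carry a negative charge, and they exceed the budget together
with the non-neighbours they need in order to have a large entry. Hence `L` is a double star with
isolated vertices, and any non-neighbour of `u` would again be too expensive. The eigenvector
equations of the graph that remains turn the deficit into a rational function of the numbers of
leaves and isolated vertices, and parity of `m` leaves `S⁻` as the only graph within budget.
-/

section SymmetricMatrix

variable {n : Type*} [Fintype n] {A : Matrix n n ℝ} {ρ : ℝ}

theorem dotProduct_smul_one_sub_mulVec [DecidableEq n] (A : Matrix n n ℝ) (ρ : ℝ) (y : n → ℝ) :
    y ⬝ᵥ (ρ • (1 : Matrix n n ℝ) - A) *ᵥ y = ρ * (y ⬝ᵥ y) - y ⬝ᵥ A *ᵥ y := by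
  rw [sub_mulVec, smul_mulVec, one_mulVec, dotProduct_sub, dotProduct_smul, smul_eq_mul]

theorem posSemidef_smul_one_sub_of_eigenvalue_le [DecidableEq n] (hA : A.IsSymm)
    (hρ : ∀ μ : ℝ, (∃ x : n → ℝ, x ≠ 0 ∧ A *ᵥ x = μ • x) → μ ≤ ρ) :
    (ρ • (1 : Matrix n n ℝ) - A).PosSemidef := by
  have hB : (ρ • (1 : Matrix n n ℝ) - A).IsHermitian := by
    rw [isHermitian_iff_isSymm]
    exact (isSymm_one.smul ρ).sub hA
  rw [hB.posSemidef_iff_eigenvalues_nonneg]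
  intro i
  have hev := hB.mulVec_eigenvectorBasis i
  rw [sub_mulVec, smul_mulVec, one_mulVec, sub_eq_iff_eq_add, ← sub_eq_iff_eq_add',
    ← sub_smul] at hev
  have hne : (hB.eigenvectorBasis i).ofLp ≠ 0 := fun h =>
    hB.eigenvectorBasis.orthonormal.ne_zero i (by ext j; exact congrFun h j)
  exact sub_le_self_iff ρ |>.1 (hρ _ ⟨_, hne, hev.symm⟩)

theorem dotProduct_mulVec_le_of_eigenvalue_le (hA : A.IsSymm)
    (hρ : ∀ μ : ℝ, (∃ x : n → ℝ, x ≠ 0 ∧ A *ᵥ x = μ • x) → μ ≤ ρ) (y : n → ℝ) :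
    y ⬝ᵥ A *ᵥ y ≤ ρ * (y ⬝ᵥ y) := by
  classical
  have h := (posSemidef_smul_one_sub_of_eigenvalue_le hA hρ).dotProduct_mulVec_nonneg y
  rw [star_trivial, dotProduct_smul_one_sub_mulVec] at h
  exact sub_nonneg.1 h

theorem mulVec_eq_smul_of_le_dotProduct_mulVec (hA : A.IsSymm)
    (hρ : ∀ μ : ℝ, (∃ x : n → ℝ, x ≠ 0 ∧ A *ᵥ x = μ • x) → μ ≤ ρ) {y : n → ℝ}
    (hy : ρ * (y ⬝ᵥ y) ≤ y ⬝ᵥ A *ᵥ y) : A *ᵥ y = ρ • y := by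
  classical
  have h := (posSemidef_smul_one_sub_of_eigenvalue_le hA hρ).dotProduct_mulVec_zero_iff y
  rw [star_trivial, dotProduct_smul_one_sub_mulVec, sub_mulVec, smul_mulVec, one_mulVec,
    sub_eq_zero, sub_eq_zero] at h
  exact (h.1 (hy.antisymm (dotProduct_mulVec_le_of_eigenvalue_le hA hρ y))).symm

theorem mulVec_abs_eq_smul_of_eigenvalue_le (hA : A.IsSymm) (hpos : ∀ i j, 0 ≤ A i j)
    (hρ : ∀ μ : ℝ, (∃ x : n → ℝ, x ≠ 0 ∧ A *ᵥ x = μ • x) → μ ≤ ρ) {z : n → ℝ}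
    (hz : A *ᵥ z = ρ • z) : A *ᵥ |z| = ρ • |z| := by
  refine mulVec_eq_smul_of_le_dotProduct_mulVec hA hρ ?_
  calc ρ * (|z| ⬝ᵥ |z|) = z ⬝ᵥ A *ᵥ z := by
        rw [hz, dotProduct_smul, smul_eq_mul]
        simp [dotProduct]
    _ ≤ |z| ⬝ᵥ A *ᵥ |z| := by
        simp only [dotProduct, mulVec, Finset.mul_sum, Pi.abs_apply]
        refine Finset.sum_le_sum fun i _ => Finset.sum_le_sum fun j _ => ?_
        refine (le_abs_self _).trans_eq ?_
        rw [abs_mul, abs_mul, abs_of_nonneg (hpos i j)]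

end SymmetricMatrix

section SpectralRadius

theorem adjMat_eq_adjMatrix {V : Type} [Fintype V] (G : SimpleGraph V) [DecidableRel G.Adj] :
    adjMat G = G.adjMatrix ℝ := by
  ext u v
  rw [adjMat, adjMatrix_apply]
  congr

theorem isSymm_adjMat {V : Type} [Fintype V] (G : SimpleGraph V) : (adjMat G).IsSymm := by
  classical
  rw [adjMat_eq_adjMatrix]
  exact isSymm_adjMatrix _

variable {V : Type} [Fintype V] {G : SimpleGraph V} {ρ : ℝ}

theorem IsSpecRad.dotProduct_mulVec_le (h : IsSpecRad G ρ) (y : V → ℝ) :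
    y ⬝ᵥ adjMat G *ᵥ y ≤ ρ * (y ⬝ᵥ y) :=
  dotProduct_mulVec_le_of_eigenvalue_le (isSymm_adjMat G) h.2 y

theorem IsSpecRad.mulVec_eq_smul (h : IsSpecRad G ρ) {y : V → ℝ}
    (hy : ρ * (y ⬝ᵥ y) ≤ y ⬝ᵥ adjMat G *ᵥ y) : adjMat G *ᵥ y = ρ • y :=
  mulVec_eq_smul_of_le_dotProduct_mulVec (isSymm_adjMat G) h.2 hy

theorem IsSpecRad.one_le_of_adj (h : IsSpecRad G ρ) {a b : V} (hab : G.Adj a b) : 1 ≤ ρ := by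
  classical
  have hle := h.dotProduct_mulVec_le (Pi.single a 1 + Pi.single b 1)
  simp only [mulVec_add, mulVec_single_one, add_dotProduct, single_one_dotProduct,
    Pi.add_apply, col_apply, adjMat, G.loopless.irrefl, hab, hab.symm, dotProduct_add,
    dotProduct_single_one, Pi.single_eq_same, Pi.single_eq_of_ne hab.ne,
    Pi.single_eq_of_ne hab.ne', if_true, if_false] at hle
  linarith

theorem IsSpecRad.le_of_iso {W : Type} [Fintype W] {H : SimpleGraph W} {ρ' : ℝ}
    (hG : IsSpecRad G ρ) (hH : IsSpecRad H ρ') (e : G ≃g H) : ρ ≤ ρ' := by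
  obtain ⟨x, hx0, hx⟩ := hG.1
  refine hH.2 ρ ⟨x ∘ e.symm, fun h0 => hx0 ?_, ?_⟩
  · ext v
    simpa using congrFun h0 (e v)
  · ext w
    have hw (w' : W) : adjMat H w w' = adjMat G (e.symm w) (e.symm w') := by
      classical
      exact if_congr e.symm.map_adj_iff.symm rfl rfl
    calc (adjMat H *ᵥ (x ∘ e.symm)) w
        = ∑ w', adjMat G (e.symm w) (e.symm w') * x (e.symm w') := by
          simp only [mulVec, dotProduct, hw, Function.comp_apply]
      _ = (adjMat G *ᵥ x) (e.symm w) :=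
          e.symm.toEquiv.sum_comp fun v => adjMat G (e.symm w) v * x v
      _ = (ρ • (x ∘ e.symm)) w := congrFun hx _

theorem IsSpecRad.eq_of_iso {W : Type} [Fintype W] {H : SimpleGraph W} {ρ' : ℝ}
    (hG : IsSpecRad G ρ) (hH : IsSpecRad H ρ') (e : G ≃g H) : ρ = ρ' :=
  (hG.le_of_iso hH e).antisymm (hH.le_of_iso hG e.symm)

/-- A nonnegative eigenvector `x` for the eigenvalue `ρ` of the adjacency matrix, normalised to have
its maximum entry `1` at `u`. The eigenvector equation is stated vertex by vertex. -/
structure IsPerronVector {V : Type*} [Fintype V] (G : SimpleGraph V) [DecidableRel G.Adj] (ρ : ℝ)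
    (x : V → ℝ) (u : V) : Prop where
  nonneg (v : V) : 0 ≤ x v
  le_one (v : V) : x v ≤ 1
  apply_eq_one : x u = 1
  sum_neighborFinset (v : V) : ∑ y ∈ G.neighborFinset v, x y = ρ * x v

theorem IsSpecRad.exists_isPerronVector [DecidableRel G.Adj] (h : IsSpecRad G ρ) :
    ∃ x u, IsPerronVector G ρ x u := by
  obtain ⟨⟨z, hz0, hz⟩, hmax⟩ := h
  have habs : adjMat G *ᵥ |z| = ρ • |z| :=
    mulVec_abs_eq_smul_of_eigenvalue_le (isSymm_adjMat G)
      (fun i j => by unfold adjMat; positivity) hmax hz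
  rw [adjMat_eq_adjMatrix] at habs
  obtain ⟨v, hv⟩ := Function.ne_iff.1 hz0
  have : Nonempty V := ⟨v⟩
  obtain ⟨u, hu⟩ := Finite.exists_max |z|
  have hu0 : 0 < |z| u := (abs_pos.2 hv).trans_le (hu v)
  refine ⟨fun v => |z| v / |z| u, u, fun v => div_nonneg (abs_nonneg _) hu0.le,
    fun v => (div_le_one hu0).2 (hu v), div_self hu0.ne', fun v => ?_⟩
  rw [← Finset.sum_div, ← adjMatrix_mulVec_apply, habs, Pi.smul_apply, smul_eq_mul, mul_div_assoc]

end SpectralRadius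

section PerronVector

variable {V : Type*} [Fintype V] {G : SimpleGraph V} [DecidableRel G.Adj] {ρ : ℝ} {x : V → ℝ}
  {u v q : V}

theorem IsPerronVector.eigenvalue_eq (h : IsPerronVector G ρ x u) :
    ρ = ∑ v ∈ G.neighborFinset u, x v := by
  rw [h.sum_neighborFinset, h.apply_eq_one, mul_one]

theorem IsPerronVector.sum_le_card (h : IsPerronVector G ρ x u) (S : Finset V) :
    ∑ y ∈ S, x y ≤ S.card := by
  simpa using Finset.sum_le_card_nsmul S x 1 fun y _ => h.le_one y

theorem IsPerronVector.mul_le_degree (h : IsPerronVector G ρ x u) (v : V) :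
    ρ * x v ≤ G.degree v :=
  h.sum_neighborFinset v ▸ h.sum_le_card _

theorem IsPerronVector.mul_le_degree_sub_one_add (h : IsPerronVector G ρ x u)
    (hvq : G.Adj v q) : ρ * x v ≤ G.degree v - 1 + x q := by
  classical
  have hq : q ∈ G.neighborFinset v := (G.mem_neighborFinset v q).2 hvq
  have hle := h.sum_le_card ((G.neighborFinset v).erase q)
  rw [Finset.cast_card_erase_of_mem hq, card_neighborFinset_eq_degree] at hle
  rw [← h.sum_neighborFinset v, ← Finset.sum_erase_add _ _ hq]
  gcongr

end PerronVector

section SminusG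

theorem SminusG_adj_inl_inl {t : ℕ} {a b : Fin 2} :
    (SminusG t).Adj (Sum.inl a) (Sum.inl b) ↔ a ≠ b := by
  simp [SminusG]

theorem SminusG_adj_inl_inr {t : ℕ} {a : Fin 2} {c : Fin t} :
    (SminusG t).Adj (Sum.inl a) (Sum.inr c) ↔ ¬(a = 0 ∧ (c : ℕ) = 0) := by
  simp [SminusG]

theorem SminusG_adj_inr_inl {t : ℕ} {a : Fin 2} {c : Fin t} :
    (SminusG t).Adj (Sum.inr c) (Sum.inl a) ↔ ¬(a = 0 ∧ (c : ℕ) = 0) := by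
  simp [SminusG]

theorem not_SminusG_adj_inr_inr {t : ℕ} {c d : Fin t} :
    ¬(SminusG t).Adj (Sum.inr c) (Sum.inr d) := by
  simp [SminusG]

/-- The test vector for the Rayleigh quotient of `SminusG (k + 1)`: `r` on the two centres, `1` on
the vertex of degree one and `2` on the vertices of degree two. -/
def sminusVector (k : ℕ) (r : ℝ) : Fin 2 ⊕ Fin (k + 1) → ℝ :=
  Sum.elim (fun _ => r) (Fin.cons 1 fun _ => 2)

theorem adjMat_SminusG_mulVec_sminusVector (k : ℕ) (r : ℝ) :
    adjMat (SminusG (k + 1)) *ᵥ sminusVector k r =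
      Sum.elim ![r + 2 * k, r + 1 + 2 * k] (Fin.cons r fun _ => 2 * r) := by
  ext (a | c)
  · fin_cases a <;>
      simp [mulVec, dotProduct, adjMat, sminusVector, SminusG_adj_inl_inl, SminusG_adj_inl_inr,
        Fin.sum_univ_succ] <;>
      ring
  · cases c using Fin.cases <;>
      simp [mulVec, dotProduct, adjMat, sminusVector, SminusG_adj_inr_inl, not_SminusG_adj_inr_inr,
        two_mul]

theorem IsSpecRad.one_le_of_SminusG {t : ℕ} {ρ : ℝ} (h : IsSpecRad (SminusG t) ρ) : 1 ≤ ρ :=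
  h.one_le_of_adj (SminusG_adj_inl_inl.2 zero_ne_one)

theorem IsSpecRad.lt_sq_sub_self_of_SminusG {t : ℕ} (ht : 0 < t) {ρ : ℝ}
    (h : IsSpecRad (SminusG t) ρ) : 2 * t - 3 / 2 < ρ ^ 2 - ρ := by
  obtain ⟨k, rfl⟩ := Nat.exists_eq_add_of_lt ht
  rw [zero_add] at h ⊢
  have hρ : 1 ≤ ρ := h.one_le_of_SminusG
  have hyy : sminusVector k ρ ⬝ᵥ sminusVector k ρ = 2 * ρ ^ 2 + 1 + 4 * k := by
    simp [sminusVector, dotProduct, Fin.sum_univ_succ]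
    ring
  have hyAy : sminusVector k ρ ⬝ᵥ adjMat (SminusG (k + 1)) *ᵥ sminusVector k ρ =
      ρ * (2 * ρ + 2 + 8 * k) := by
    rw [adjMat_SminusG_mulVec_sminusVector]
    simp [sminusVector, dotProduct, Fin.sum_univ_succ]
    ring
  have hstrict : sminusVector k ρ ⬝ᵥ adjMat (SminusG (k + 1)) *ᵥ sminusVector k ρ <
      ρ * (sminusVector k ρ ⬝ᵥ sminusVector k ρ) := by
    by_contra! hle
    have heig := h.mulVec_eq_smul hle
    rw [adjMat_SminusG_mulVec_sminusVector] at heig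
    have h0 : ρ + 2 * k = ρ * ρ := congrFun heig (Sum.inl 0)
    have h1 : ρ + 1 + 2 * k = ρ * ρ := congrFun heig (Sum.inl 1)
    linarith
  rw [hyy, hyAy] at hstrict
  have := lt_of_mul_lt_mul_left hstrict (zero_le_one.trans hρ)
  push_cast
  linarith

/-- A labelled form of `SminusG`: the edges of `G` are exactly those joining a centre `u` or `c` to
another vertex, except for the pair `c`, `i`. -/
structure IsSMinus {V : Type*} (G : SimpleGraph V) (u c i : V) : Prop where
  centers_ne : u ≠ c
  pendant_ne_left : i ≠ u
  pendant_ne_right : i ≠ c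
  adj_iff {y z : V} :
    G.Adj y z ↔ y ≠ z ∧ (y = u ∨ z = u ∨ (y = c ∧ z ≠ i) ∨ (z = c ∧ y ≠ i))

theorem isSMinus_SminusG (t : ℕ) [NeZero t] :
    IsSMinus (SminusG t) (Sum.inl 1) (Sum.inl 0) (Sum.inr 0) where
  centers_ne := by simp
  pendant_ne_left := by simp
  pendant_ne_right := by simp
  adj_iff {y z} := by
    have h0 (c : Fin t) : (c : ℕ) = 0 ↔ c = 0 := Fin.val_eq_zero_iff
    have (a : Fin 2) : a = 1 ↔ a ≠ 0 := by lia
    rcases y with a | a <;> rcases z with b | b <;>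
      simp only [SminusG_adj_inl_inl, SminusG_adj_inl_inr, SminusG_adj_inr_inl,
        not_SminusG_adj_inr_inr] <;> grind

theorem IsSMinus.nonempty_iso {V W : Type*} [Fintype V] [Fintype W] {G : SimpleGraph V}
    {H : SimpleGraph W} {u c i : V} {u' c' i' : W} (hG : IsSMinus G u c i)
    (hH : IsSMinus H u' c' i') (hcard : Fintype.card V = Fintype.card W) : Nonempty (G ≃g H) := by
  classical
  have hu' := hH.centers_ne
  have hi' := hH.pendant_ne_left
  have hi'' := hH.pendant_ne_right
  let f : V → W := fun v => if v = u then u' else if v = c then c' else i'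
  have hu : f u = u' := if_pos rfl
  have hc : f c = c' := by simp [f, hG.centers_ne.symm]
  have hi : f i = i' := by simp [f, hG.pendant_ne_left, hG.pendant_ne_right]
  have hf : Set.InjOn f ({u, c, i} : Finset V) := fun y hy z hz => by grind
  obtain ⟨e', he'⟩ :=
    Finset.exists_equiv_extend_of_card_eq (t := Finset.univ) hcard (Finset.subset_univ _) hf
  let e : V ≃ W := e'.trans (Equiv.subtypeUnivEquiv Finset.mem_univ)
  have he (v : V) (hv : v ∈ ({u, c, i} : Finset V)) : e v = f v := he' v hv
  have heu : e u = u' := (he u (by simp)).trans hu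
  have hec : e c = c' := (he c (by simp)).trans hc
  have hei : e i = i' := (he i (by simp)).trans hi
  refine ⟨⟨e, fun {y z} => ?_⟩⟩
  rw [hG.adj_iff, hH.adj_iff, ← heu, ← hec, ← hei]
  simp only [ne_eq, e.apply_eq_iff_eq]

end SminusG

section Link

variable {V : Type*} {G : SimpleGraph V} {u v w p q : V}

/-- The link of `u` in `G`: the graph induced by `G` on the neighbours of `u`. It keeps the vertex
type of `G`, the vertices that are not adjacent to `u` being isolated. -/
def link (G : SimpleGraph V) (u : V) : SimpleGraph V where
  Adj a b := G.Adj a b ∧ G.Adj u a ∧ G.Adj u b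
  symm := ⟨fun _ _ h => ⟨h.1.symm, h.2.2, h.2.1⟩⟩
  loopless := ⟨fun _ h => h.1.ne rfl⟩

instance [DecidableRel G.Adj] : DecidableRel (link G u).Adj :=
  fun a b => inferInstanceAs (Decidable (G.Adj a b ∧ G.Adj u a ∧ G.Adj u b))

theorem link_adj : (link G u).Adj v w ↔ G.Adj v w ∧ G.Adj u v ∧ G.Adj u w := Iff.rfl

theorem containsSub_theta133 {V : Type} {G : SimpleGraph V} {a b c d e f : V}
    (hnd : [a, b, c, d, e, f].Nodup) (hab : G.Adj a b) (hac : G.Adj a c) (hcd : G.Adj c d)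
    (hdb : G.Adj d b) (hae : G.Adj a e) (hef : G.Adj e f) (hfb : G.Adj f b) :
    ContainsSub theta133 G := by
  refine ⟨⟨![a, b, c, d, e, f], fun {i j} hij => ?_⟩, ?_⟩
  · have hG := G.adj_comm
    fin_cases i <;> fin_cases j <;> simp [theta133] at hij ⊢ <;> grind
  · exact List.nodup_ofFn.1 hnd

theorem pathGraph_five_free_link {V : Type} {G : SimpleGraph V}
    (hfree : ¬ContainsSub theta133 G) (u : V) : (pathGraph 5).Free (link G u) := by
  rintro ⟨f⟩
  have hadj (i j : Fin 5) (h : i.val + 1 = j.val) : (link G u).Adj (f i) (f j) :=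
    f.toHom.map_adj (pathGraph_adj.2 (Or.inl h))
  have h01 := hadj 0 1 rfl
  have h12 := hadj 1 2 rfl
  have h23 := hadj 2 3 rfl
  have h34 := hadj 3 4 rfl
  refine hfree (containsSub_theta133 (a := u) (b := f 2) (c := f 0) (d := f 1) (e := f 4)
    (f := f 3) ?_ h12.2.2 h01.2.1 h01.1 h12.1 h34.2.2 h34.1.symm h23.1.symm)
  have hf (i j : Fin 5) : f i = f j ↔ i = j := f.injective.eq_iff
  simp [hf, h01.2.1.ne, h12.2.1.ne, h23.2.1.ne, h34.2.1.ne, h34.2.2.ne]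

theorem pathGraph_five_isContained {L : SimpleGraph V} {a b c d e : V}
    (hnd : [a, b, c, d, e].Nodup) (hab : L.Adj a b) (hbc : L.Adj b c) (hcd : L.Adj c d)
    (hde : L.Adj d e) : pathGraph 5 ⊑ L := by
  refine ⟨⟨![a, b, c, d, e], fun {i j} hij => ?_⟩, List.nodup_ofFn.1 hnd⟩
  have hL := L.adj_comm
  rw [pathGraph_adj] at hij
  fin_cases i <;> fin_cases j <;> simp at hij ⊢ <;> grind

end Link

section Deficit

variable {V : Type*} (G : SimpleGraph V) [DecidableRel G.Adj]

/-- The number of neighbours of `v` in the vertex set `S`. -/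
def degreeIn (S : Finset V) (v : V) : ℕ := (S.filter (G.Adj v)).card

theorem sum_sum_filter_adj (S T : Finset V) (f : V → ℝ) :
    ∑ v ∈ S, ∑ y ∈ T with G.Adj v y, f y = ∑ y ∈ T, degreeIn G S y * f y := by
  simp_rw [degreeIn, ← nsmul_eq_mul, ← Finset.sum_const]
  refine Finset.sum_comm' fun v y => ?_
  simp only [Finset.mem_filter, G.adj_comm v y]
  tauto

theorem sum_degreeIn_comm (S T : Finset V) :
    ∑ v ∈ S, (degreeIn G T v : ℝ) = ∑ y ∈ T, (degreeIn G S y : ℝ) := by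
  simpa [degreeIn] using sum_sum_filter_adj G S T 1

variable [Fintype V] [DecidableEq V]

theorem sum_univ_eq_add_sum_neighborFinset_add_sum_compl (u : V) (f : V → ℝ) :
    ∑ v, f v = f u + ∑ v ∈ G.neighborFinset u, f v + ∑ v ∈ Gᶜ.neighborFinset u, f v := by
  rw [neighborFinset_compl, Finset.sum_sdiff_eq_sub, Finset.sum_singleton,
    ← Finset.sum_add_sum_compl (G.neighborFinset u)]
  · ring
  · simp

theorem sum_neighborFinset_eq_ite_add_sum_filter_add_sum_filter (u v : V) (f : V → ℝ) :
    ∑ y ∈ G.neighborFinset v, f y = (if G.Adj v u then f u else 0) +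
      ∑ y ∈ G.neighborFinset u with G.Adj v y, f y +
      ∑ y ∈ Gᶜ.neighborFinset u with G.Adj v y, f y := by
  rw [neighborFinset_eq_filter G (v := v), Finset.sum_filter,
    sum_univ_eq_add_sum_neighborFinset_add_sum_compl G u, Finset.sum_filter, Finset.sum_filter]

theorem degree_eq_ite_add_degreeIn_add_degreeIn (u v : V) :
    (G.degree v : ℝ) = (if G.Adj v u then 1 else 0) + degreeIn G (G.neighborFinset u) v +
      degreeIn G (Gᶜ.neighborFinset u) v := by
  simpa [degreeIn] using sum_neighborFinset_eq_ite_add_sum_filter_add_sum_filter G u v 1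

theorem two_mul_card_edgeFinset_eq (u : V) :
    2 * (G.edgeFinset.card : ℝ) =
      ∑ v ∈ G.neighborFinset u, (2 + degreeIn G (G.neighborFinset u) v : ℝ) +
      ∑ w ∈ Gᶜ.neighborFinset u, (2 * degreeIn G (G.neighborFinset u) w +
        degreeIn G (Gᶜ.neighborFinset u) w : ℝ) := by
  have hA : ∑ v ∈ G.neighborFinset u, (G.degree v : ℝ) = ∑ v ∈ G.neighborFinset u,
      (1 + degreeIn G (G.neighborFinset u) v + degreeIn G (Gᶜ.neighborFinset u) v : ℝ) :=
    Finset.sum_congr rfl fun v hv => by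
      rw [degree_eq_ite_add_degreeIn_add_degreeIn G u v,
        if_pos ((G.mem_neighborFinset u v).1 hv).symm]
  have hW : ∑ w ∈ Gᶜ.neighborFinset u, (G.degree w : ℝ) = ∑ w ∈ Gᶜ.neighborFinset u,
      (degreeIn G (G.neighborFinset u) w + degreeIn G (Gᶜ.neighborFinset u) w : ℝ) :=
    Finset.sum_congr rfl fun w hw => by
      rw [degree_eq_ite_add_degreeIn_add_degreeIn G u w,
        if_neg fun h => ((Gᶜ.mem_neighborFinset u w).1 hw).2 h.symm, zero_add]
  have hu : (G.degree u : ℝ) = ∑ v ∈ G.neighborFinset u, 1 := by simp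
  have hcross := sum_degreeIn_comm G (G.neighborFinset u) (Gᶜ.neighborFinset u)
  have htotal := congrArg (Nat.cast (R := ℝ)) G.sum_degrees_eq_twice_card_edges
  push_cast at htotal
  rw [← htotal, sum_univ_eq_add_sum_neighborFinset_add_sum_compl G u, hA, hW, hu]
  simp only [Finset.sum_add_distrib, ← Finset.mul_sum] at hcross ⊢
  simp
  linarith

variable {G} {ρ : ℝ} {x : V → ℝ} {u : V}

theorem IsPerronVector.eigenvalue_sq_eq (h : IsPerronVector G ρ x u) :
    ρ ^ 2 = ∑ v ∈ G.neighborFinset u, (1 + degreeIn G (G.neighborFinset u) v * x v) +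
      ∑ w ∈ Gᶜ.neighborFinset u, degreeIn G (G.neighborFinset u) w * x w := by
  calc ρ ^ 2 = ∑ v ∈ G.neighborFinset u, ∑ y ∈ G.neighborFinset v, x y := by
        simp_rw [h.sum_neighborFinset, ← Finset.mul_sum, ← h.eigenvalue_eq, sq]
    _ = ∑ v ∈ G.neighborFinset u, (1 + ∑ y ∈ G.neighborFinset u with G.Adj v y, x y +
          ∑ y ∈ Gᶜ.neighborFinset u with G.Adj v y, x y) :=
        Finset.sum_congr rfl fun v hv => by
          rw [sum_neighborFinset_eq_ite_add_sum_filter_add_sum_filter G u v,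
            if_pos ((G.mem_neighborFinset u v).1 hv).symm, h.apply_eq_one]
    _ = _ := by
        simp only [Finset.sum_add_distrib, sum_sum_filter_adj]

/-- The contribution of a non-neighbour `w` of `u` to the deficit `m - ρ² + ρ`. -/
noncomputable def outerCharge (G : SimpleGraph V) [DecidableRel G.Adj] (u : V) (x : V → ℝ)
    (w : V) : ℝ :=
  degreeIn G (G.neighborFinset u) w * (1 - x w) + degreeIn G (Gᶜ.neighborFinset u) w / 2

theorem IsPerronVector.card_edgeFinset_sub_sq_add (h : IsPerronVector G ρ x u) :
    G.edgeFinset.card - ρ ^ 2 + ρ =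
      ∑ v ∈ G.neighborFinset u, ((degreeIn G (G.neighborFinset u) v : ℝ) / 2 -
        (degreeIn G (G.neighborFinset u) v - 1) * x v) +
      ∑ w ∈ Gᶜ.neighborFinset u, outerCharge G u x w := by
  have hm := two_mul_card_edgeFinset_eq G u
  have hρ := h.eigenvalue_eq
  rw [h.eigenvalue_sq_eq]
  simp only [outerCharge, Finset.sum_add_distrib, Finset.sum_sub_distrib, mul_sub, sub_mul, one_mul,
    mul_one, ← Finset.sum_div, ← Finset.mul_sum] at hm ⊢
  simp only [Finset.sum_const, nsmul_eq_mul, mul_one] at hm ⊢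
  linarith

end Deficit

section Leaf

variable {V : Type*} [Fintype V] (L : SimpleGraph V) [DecidableRel L.Adj]

/-- The number of neighbours of `v` that have degree one. -/
def leafDegree (v : V) : ℕ := ((L.neighborFinset v).filter (L.degree · = 1)).card

/-- The number of neighbours of `v` that do not have degree one. -/
def coreDegree (v : V) : ℕ := ((L.neighborFinset v).filter (L.degree · ≠ 1)).card

theorem leafDegree_add_coreDegree (v : V) : leafDegree L v + coreDegree L v = L.degree v :=
  Finset.card_filter_add_card_filter_not _

theorem sum_leafDegree :
    ∑ v, (leafDegree L v : ℝ) = ∑ v, if L.degree v = 1 then 1 else 0 := by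
  calc ∑ v, (leafDegree L v : ℝ)
      = ∑ v, ∑ y with L.Adj v y, if L.degree y = 1 then 1 else 0 := by
        simp_rw [leafDegree, ← neighborFinset_eq_filter, Finset.sum_boole]
    _ = ∑ y, if L.degree y = 1 then 1 else 0 := by
        rw [sum_sum_filter_adj]
        refine Finset.sum_congr rfl fun y _ => ?_
        rw [degreeIn, ← neighborFinset_eq_filter, card_neighborFinset_eq_degree]
        split_ifs with h <;> simp [h]

variable {L} {v y z : V}

theorem eq_of_adj_of_degree_eq_one (hv : L.degree v = 1) (hy : L.Adj v y) (hz : L.Adj v z) :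
    y = z := by
  obtain ⟨w, -, hw⟩ := degree_eq_one_iff_existsUnique_adj.1 hv
  rw [hw y hy, hw z hz]

theorem exists_adj_ne_of_degree_ne_one (hv : L.Adj v y) (hy : L.degree y ≠ 1) :
    ∃ z, L.Adj y z ∧ z ≠ v := by
  by_contra! h
  exact hy (degree_eq_one_iff_existsUnique_adj.2 ⟨v, hv.symm, h⟩)

theorem exists_leaf_of_leafDegree_ne_zero (h : leafDegree L v ≠ 0) :
    ∃ l, L.Adj v l ∧ L.degree l = 1 := by
  simpa [leafDegree, Finset.filter_nonempty_iff] using Finset.card_ne_zero.1 h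

theorem leafDegree_pos (hvy : L.Adj v y) (hy : L.degree y = 1) : 0 < leafDegree L v :=
  Finset.card_pos.2 ⟨y, by simpa using ⟨hvy, hy⟩⟩

end Leaf

section PathFiveFree

variable {V : Type*} {L : SimpleGraph V} {v b c e z b' c' e' : V}

theorem eq_of_adj_of_not_adj (h5 : (pathGraph 5).Free L) (hb : L.Adj v b) (hc : L.Adj v c)
    (hbc : b ≠ c) (hbc' : ¬L.Adj b c) (hb' : L.Adj b b') (hbv : b' ≠ v) (hc' : L.Adj c c')
    (hcv : c' ≠ v) : b' = c' := by
  by_contra hne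
  refine h5 (pathGraph_five_isContained ?_ hb'.symm hb.symm hc hc')
  grind [SimpleGraph.adj_comm, SimpleGraph.Adj.ne]

theorem not_adj_of_four_neighbors (h5 : (pathGraph 5).Free L) (hb : L.Adj v b) (hc : L.Adj v c)
    (he : L.Adj v e) (hz : L.Adj v z) (hnd : [b, c, e, z].Nodup) (he' : L.Adj e e')
    (hev : e' ≠ v) : ¬L.Adj b c := by
  intro hbc
  have hnd' : [v, b, c, e, z].Nodup := by
    have := hb.ne; have := hc.ne; have := he.ne; have := hz.ne
    grind
  have hne := he'.ne
  by_cases heb : e' = b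
  · subst heb
    exact h5 (pathGraph_five_isContained (by grind) hbc.symm he'.symm he.symm hz)
  by_cases hec : e' = c
  · subst hec
    exact h5 (pathGraph_five_isContained (by grind) hbc he'.symm he.symm hz)
  exact h5 (pathGraph_five_isContained (by grind) he'.symm he.symm hb hbc)

variable [Fintype V] [DecidableRel L.Adj]

theorem degree_le_three_of_three_le_coreDegree (h5 : (pathGraph 5).Free L)
    (h : 3 ≤ coreDegree L v) : L.degree v ≤ 3 := by
  classical
  by_contra! hd
  obtain ⟨b, hb, c, hc, e, he, hbc, hbe, hce⟩ := Finset.two_lt_card.1 h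
  simp only [Finset.mem_filter, mem_neighborFinset] at hb hc he
  obtain ⟨z, hz, hzbce⟩ := Finset.exists_mem_notMem_of_card_lt_card
    (Finset.card_le_three.trans_lt hd : ({b, c, e} : Finset V).card < _)
  rw [mem_neighborFinset] at hz
  obtain ⟨b', hb', hbv⟩ := exists_adj_ne_of_degree_ne_one hb.1 hb.2
  obtain ⟨c', hc', hcv⟩ := exists_adj_ne_of_degree_ne_one hc.1 hc.2
  obtain ⟨e', he', hev⟩ := exists_adj_ne_of_degree_ne_one he.1 he.2
  have hnbc := not_adj_of_four_neighbors h5 hb.1 hc.1 he.1 hz (by grind) he' hev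
  have hnbe := not_adj_of_four_neighbors h5 hb.1 he.1 hc.1 hz (by grind) hc' hcv
  obtain rfl := eq_of_adj_of_not_adj h5 hb.1 hc.1 hbc hnbc hb' hbv hc' hcv
  refine h5 (pathGraph_five_isContained ?_ hb' hc'.symm hc.1.symm he.1)
  grind [SimpleGraph.adj_comm, SimpleGraph.Adj.ne]

theorem leafDegree_eq_zero_of_path (h5 : (pathGraph 5).Free L) (hvb : L.Adj v b) (hbc : L.Adj b c)
    (hce : L.Adj c e) (hnd : [v, b, c, e].Nodup) : leafDegree L v = 0 := by
  by_contra hv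
  obtain ⟨l, hl, hl1⟩ := exists_leaf_of_leafDegree_ne_zero hv
  have hlv {y : V} (hy : L.Adj l y) : v = y := eq_of_adj_of_degree_eq_one hl1 hl.symm hy
  refine h5 (pathGraph_five_isContained ?_ hl.symm hvb hbc hce)
  have hne := hl.ne
  grind [SimpleGraph.adj_comm]

theorem leafDegree_eq_zero_of_triangle (h5 : (pathGraph 5).Free L) (hvb : L.Adj v b)
    (hvc : L.Adj v c) (hbc : L.Adj b c) (hv : leafDegree L v ≠ 0) : leafDegree L b = 0 := by
  obtain ⟨l, hl, hl1⟩ := exists_leaf_of_leafDegree_ne_zero hv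
  have hlv {y : V} (hy : L.Adj l y) : v = y := eq_of_adj_of_degree_eq_one hl1 hl.symm hy
  refine leafDegree_eq_zero_of_path h5 hbc hvc.symm hl ?_
  grind [SimpleGraph.adj_comm, SimpleGraph.Adj.ne]

/-- A vertex of degree at least two without neighbours of degree one. -/
def IsLeaflessCore (L : SimpleGraph V) [DecidableRel L.Adj] (v : V) : Prop :=
  2 ≤ L.degree v ∧ leafDegree L v = 0

theorem exists_adj_isLeaflessCore (h5 : (pathGraph 5).Free L) (h : 2 ≤ coreDegree L v) :
    ∃ p q, L.Adj p q ∧ IsLeaflessCore L p ∧ IsLeaflessCore L q := by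
  obtain ⟨b, hb, c, hc, hbc⟩ := Finset.one_lt_card.1 h
  simp only [Finset.mem_filter, mem_neighborFinset] at hb hc
  have hdeg {y : V} (hy : L.Adj v y ∧ L.degree y ≠ 1) : 2 ≤ L.degree y := by
    have := (L.degree_pos_iff_exists_adj y).2 ⟨v, hy.1.symm⟩
    lia
  have hv : 2 ≤ L.degree v := by
    have := leafDegree_add_coreDegree L v
    lia
  by_cases hadj : L.Adj b c
  · by_cases hv0 : leafDegree L v = 0
    · by_cases hb0 : leafDegree L b = 0
      · exact ⟨v, b, hb.1, ⟨hv, hv0⟩, hdeg hb, hb0⟩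
      · exact ⟨v, c, hc.1, ⟨hv, hv0⟩, hdeg hc,
          leafDegree_eq_zero_of_triangle h5 hadj hb.1.symm hc.1.symm hb0⟩
    · exact ⟨b, c, hadj, ⟨hdeg hb, leafDegree_eq_zero_of_triangle h5 hb.1 hc.1 hadj hv0⟩,
        hdeg hc, leafDegree_eq_zero_of_triangle h5 hc.1 hb.1 hadj.symm hv0⟩
  · obtain ⟨y, hy, hyv⟩ := exists_adj_ne_of_degree_ne_one hb.1 hb.2
    obtain ⟨y', hy', hyv'⟩ := exists_adj_ne_of_degree_ne_one hc.1 hc.2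
    obtain rfl := eq_of_adj_of_not_adj h5 hb.1 hc.1 hbc hadj hy hyv hy' hyv'
    refine ⟨v, b, hb.1, ⟨hv, leafDegree_eq_zero_of_path h5 hb.1 hy hy'.symm ?_⟩, hdeg hb,
      leafDegree_eq_zero_of_path h5 hy hy'.symm hc.1.symm ?_⟩ <;>
    grind [SimpleGraph.Adj.ne]

end PathFiveFree

section Charge

variable {V : Type*} [Fintype V] (L : SimpleGraph V) [DecidableRel L.Adj] (x : V → ℝ)

/-- The charge of a vertex `v` of the link, given the weights `x`. The first two terms are the
contribution of `v` to the deficit; the last one moves `1 / 2` from each vertex of degree one to its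
neighbour. -/
noncomputable def charge (v : V) : ℝ :=
  (L.degree v : ℝ) / 2 - (L.degree v - 1) * x v +
    (leafDegree L v - if L.degree v = 1 then 1 else 0) / 2

variable {L x} {v y : V}

theorem charge_of_degree_eq_zero (hv : L.degree v = 0) : charge L x v = x v := by
  have hl := leafDegree_add_coreDegree L v
  rw [hv, Nat.add_eq_zero_iff] at hl
  simp [charge, hv, hl.1]

theorem charge_of_degree_eq_one (hv : L.degree v = 1) :
    charge L x v = (leafDegree L v : ℝ) / 2 := by
  simp only [charge, hv, if_true, Nat.cast_one]
  ring

theorem one_sub_coreDegree_div_two_le_charge (hv : 2 ≤ L.degree v) (hx : x v ≤ 1) :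
    1 - (coreDegree L v : ℝ) / 2 ≤ charge L x v := by
  have hl : (leafDegree L v + coreDegree L v : ℝ) = L.degree v := by
    exact_mod_cast leafDegree_add_coreDegree L v
  have hd : (1 : ℝ) ≤ L.degree v := by exact_mod_cast one_le_two.trans hv
  have hmul := mul_le_mul_of_nonneg_left hx (sub_nonneg.2 hd)
  rw [charge, if_neg (by lia)]
  linarith

theorem charge_nonneg (h0 : 0 ≤ x v) (h1 : x v ≤ 1) (hv : 2 ≤ L.degree v → coreDegree L v ≤ 2) :
    0 ≤ charge L x v := by
  obtain hd | hd | hd : L.degree v = 0 ∨ L.degree v = 1 ∨ 2 ≤ L.degree v := by lia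
  · rwa [charge_of_degree_eq_zero hd]
  · rw [charge_of_degree_eq_one hd]
    positivity
  · have hc : (coreDegree L v : ℝ) ≤ 2 := by exact_mod_cast hv hd
    linarith [one_sub_coreDegree_div_two_le_charge hd h1]

end Charge

section LinkCharge

variable {V : Type*} [Fintype V] {G : SimpleGraph V} [DecidableRel G.Adj] {ρ : ℝ} {x : V → ℝ}
  {u v : V}

theorem degree_link (hv : G.Adj u v) :
    (link G u).degree v = degreeIn G (G.neighborFinset u) v := by
  rw [← card_neighborFinset_eq_degree, degreeIn]
  congr 1
  ext y
  simp [link_adj, hv, and_comm]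

theorem degree_link_eq_zero (hv : ¬G.Adj u v) : (link G u).degree v = 0 := by
  rw [degree_eq_zero]
  exact fun y hy => hv hy.2.1

theorem sum_charge_link (G : SimpleGraph V) [DecidableRel G.Adj] (u : V) (x : V → ℝ) :
    ∑ v ∈ G.neighborFinset u, charge (link G u) x v =
      ∑ v ∈ G.neighborFinset u, ((degreeIn G (G.neighborFinset u) v : ℝ) / 2 -
        (degreeIn G (G.neighborFinset u) v - 1) * x v) := by
  have htransfer : ∑ v ∈ G.neighborFinset u, ((leafDegree (link G u) v : ℝ) -
      if (link G u).degree v = 1 then 1 else 0) = 0 := by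
    rw [Finset.sum_subset (Finset.subset_univ _), Finset.sum_sub_distrib, sum_leafDegree, sub_self]
    intro v _ hv
    rw [mem_neighborFinset] at hv
    have hl := leafDegree_add_coreDegree (link G u) v
    rw [degree_link_eq_zero hv, Nat.add_eq_zero_iff] at hl
    simp [degree_link_eq_zero hv, hl.1]
  simp only [charge]
  rw [Finset.sum_add_distrib, ← Finset.sum_div, htransfer, zero_div, add_zero]
  refine Finset.sum_congr rfl fun v hv => ?_
  rw [degree_link ((G.mem_neighborFinset u v).1 hv)]

variable [DecidableEq V]

theorem degree_eq_one_add_degree_link_add (hv : G.Adj u v) :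
    (G.degree v : ℝ) =
      1 + (link G u).degree v + degreeIn G (Gᶜ.neighborFinset u) v := by
  rw [degree_eq_ite_add_degreeIn_add_degreeIn G u v, if_pos hv.symm, degree_link hv]

theorem IsPerronVector.sum_charge_add_sum_outerCharge (h : IsPerronVector G ρ x u) :
    ∑ v ∈ G.neighborFinset u, charge (link G u) x v +
      ∑ w ∈ Gᶜ.neighborFinset u, outerCharge G u x w = G.edgeFinset.card - ρ ^ 2 + ρ := by
  rw [sum_charge_link, h.card_edgeFinset_sub_sq_add]

theorem IsPerronVector.outerCharge_nonneg (h : IsPerronVector G ρ x u) (w : V) :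
    0 ≤ outerCharge G u x w := by
  have := sub_nonneg.2 (h.le_one w)
  unfold outerCharge
  positivity

end LinkCharge

section LeaflessCore

variable {V : Type*} [Fintype V] {L : SimpleGraph V} [DecidableRel L.Adj] {x : V → ℝ} {v : V}

theorem IsLeaflessCore.coreDegree_eq (hv : IsLeaflessCore L v) : coreDegree L v = L.degree v := by
  rw [← leafDegree_add_coreDegree, hv.2, zero_add]

theorem IsLeaflessCore.degree_eq_two_or_three (hv : IsLeaflessCore L v)
    (h5 : (pathGraph 5).Free L) : L.degree v = 2 ∨ L.degree v = 3 := by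
  have h2 := hv.1
  have h3 := degree_le_three_of_three_le_coreDegree h5 (v := v)
  rw [hv.coreDegree_eq] at h3
  lia

theorem IsLeaflessCore.exists_path (hv : IsLeaflessCore L v) :
    ∃ p q, L.Adj v p ∧ L.Adj p q ∧ q ≠ v := by
  have hpos : 0 < coreDegree L v := by
    have := hv.1
    rw [hv.coreDegree_eq]
    lia
  obtain ⟨p, hp⟩ := Finset.card_pos.1 hpos
  rw [Finset.mem_filter, mem_neighborFinset] at hp
  obtain ⟨q, hq⟩ := exists_adj_ne_of_degree_ne_one hp.1 hp.2
  exact ⟨p, q, hp.1, hq⟩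

theorem IsLeaflessCore.charge_eq (hv : IsLeaflessCore L v) :
    charge L x v = (L.degree v : ℝ) / 2 - (L.degree v - 1) * x v := by
  have := hv.1
  rw [charge, hv.2, if_neg (by lia)]
  simp

theorem charge_nonneg_of_not_isLeaflessCore (h5 : (pathGraph 5).Free L) (h0 : 0 ≤ x v)
    (h1 : x v ≤ 1) (hv : ¬IsLeaflessCore L v) : 0 ≤ charge L x v := by
  refine charge_nonneg h0 h1 fun hd => ?_
  have hl : leafDegree L v ≠ 0 := fun h => hv ⟨hd, h⟩
  have h3 := degree_le_three_of_three_le_coreDegree h5 (v := v)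
  have hsum := leafDegree_add_coreDegree L v
  lia

end LeaflessCore

section CoreFree

variable {V : Type} [Fintype V] {G : SimpleGraph V} [DecidableRel G.Adj]
  {ρ : ℝ} {x : V → ℝ} {u v w p q : V}

theorem degreeIn_neighborFinset_le_three (hfree : ¬ContainsSub theta133 G) (hwu : w ≠ u)
    (huw : ¬G.Adj u w) (hwv : G.Adj w v) (hvp : (link G u).Adj v p) (hpq : (link G u).Adj p q)
    (hvq : v ≠ q) : degreeIn G (G.neighborFinset u) w ≤ 3 := by
  classical
  by_contra! h
  obtain ⟨z, hz, hzvpq⟩ := Finset.exists_mem_notMem_of_card_lt_card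
    (Finset.card_le_three.trans_lt h : ({v, p, q} : Finset V).card < _)
  simp only [Finset.mem_filter, mem_neighborFinset] at hz
  refine hfree (containsSub_theta133 (a := u) (b := v) (c := z) (d := w) (e := q) (f := p)
    ?_ hvp.2.1 hz.1 hz.2.symm hwv hpq.2.2 hpq.1.symm hvp.1.symm)
  have huv := hvp.2.1.ne; have hup := hpq.2.1.ne; have huq := hpq.2.2.ne
  have huz := hz.1.ne; have hvp' := hvp.1.ne; have hpq' := hpq.1.ne
  have hwq : w ≠ q := fun h => huw (h ▸ hpq.2.2)
  have hwp : w ≠ p := fun h => huw (h ▸ hpq.2.1)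
  have hwz : w ≠ z := fun h => huw (h ▸ hz.1)
  have hwv' := hwv.ne
  grind

variable [DecidableEq V]

theorem IsPerronVector.seven_tenths_mul_le_outerCharge (h : IsPerronVector G ρ x u) (hρ : 10 ≤ ρ)
    (hw : w ∈ Gᶜ.neighborFinset u) (hA : degreeIn G (G.neighborFinset u) w ≤ 3) :
    7 / 10 * (degreeIn G (G.neighborFinset u) w : ℝ) ≤ outerCharge G u x w := by
  have hx : 10 * x w ≤ degreeIn G (G.neighborFinset u) w + degreeIn G (Gᶜ.neighborFinset u) w := by
    have hdeg := h.mul_le_degree w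
    rw [degree_eq_ite_add_degreeIn_add_degreeIn G u w,
      if_neg fun hwu => ((Gᶜ.mem_neighborFinset u w).1 hw).2 hwu.symm, zero_add] at hdeg
    exact (mul_le_mul_of_nonneg_right hρ (h.nonneg w)).trans hdeg
  have hA' : (degreeIn G (G.neighborFinset u) w : ℝ) ≤ 3 := by exact_mod_cast hA
  unfold outerCharge
  nlinarith [mul_nonneg (Nat.cast_nonneg (α := ℝ) (degreeIn G (G.neighborFinset u) w))
    (sub_nonneg.2 hx), mul_nonneg (Nat.cast_nonneg (α := ℝ) (degreeIn G (Gᶜ.neighborFinset u) w))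
    (sub_nonneg.2 hA'), mul_nonneg (Nat.cast_nonneg (α := ℝ) (degreeIn G (G.neighborFinset u) w))
    (sub_nonneg.2 hA')]

theorem IsPerronVector.sum_mul_degreeIn_le_sum_outerCharge (h : IsPerronVector G ρ x u)
    (hρ : 10 ≤ ρ) (hfree : ¬ContainsSub theta133 G) {Q : Finset V}
    (hQ : ∀ v ∈ Q, IsLeaflessCore (link G u) v) :
    ∑ v ∈ Q, 7 / 10 * (degreeIn G (Gᶜ.neighborFinset u) v : ℝ) ≤
      ∑ w ∈ Gᶜ.neighborFinset u, outerCharge G u x w := by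
  rw [← Finset.mul_sum, sum_degreeIn_comm, Finset.mul_sum]
  refine Finset.sum_le_sum fun w hw => ?_
  obtain hQw | ⟨v, hv⟩ := (Q.filter (G.Adj w)).eq_empty_or_nonempty
  · simpa [degreeIn, hQw] using h.outerCharge_nonneg w
  rw [Finset.mem_filter] at hv
  obtain ⟨p, q, hvp, hpq, hqv⟩ := (hQ v hv.1).exists_path
  obtain ⟨hwu, huw⟩ := (Gᶜ.mem_neighborFinset u w).1 hw
  have hA := degreeIn_neighborFinset_le_three hfree hwu.symm huw hv.2 hvp hpq hqv.symm
  have hsub : Q ⊆ G.neighborFinset u := fun y hy => by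
    obtain ⟨_, _, hyp, _⟩ := (hQ y hy).exists_path
    exact (G.mem_neighborFinset u y).2 hyp.2.1
  have hle : degreeIn G Q w ≤ degreeIn G (G.neighborFinset u) w :=
    Finset.card_le_card (Finset.filter_subset_filter _ hsub)
  refine le_trans ?_ (h.seven_tenths_mul_le_outerCharge hρ hw hA)
  gcongr

theorem IsPerronVector.ten_mul_le_degree_link_add (h : IsPerronVector G ρ x u) (hρ : 10 ≤ ρ)
    (hpq : (link G u).Adj p q) :
    10 * x p ≤ (link G u).degree p + degreeIn G (Gᶜ.neighborFinset u) p + x q := by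
  have hle := h.mul_le_degree_sub_one_add hpq.1
  rw [degree_eq_one_add_degree_link_add hpq.2.1] at hle
  linarith [mul_le_mul_of_nonneg_right hρ (h.nonneg p)]

theorem IsPerronVector.charge_add_nonneg (h : IsPerronVector G ρ x u) (hρ : 10 ≤ ρ)
    (hfree : ¬ContainsSub theta133 G) (hv : IsLeaflessCore (link G u) v) :
    0 ≤ charge (link G u) x v + 7 / 10 * degreeIn G (Gᶜ.neighborFinset u) v := by
  obtain ⟨p, _, hvp, _⟩ := hv.exists_path
  have hx := h.ten_mul_le_degree_link_add hρ hvp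
  have hD : (0 : ℝ) ≤ degreeIn G (Gᶜ.neighborFinset u) v := Nat.cast_nonneg _
  have hv1 := h.le_one v
  have hp1 := h.le_one p
  rw [hv.charge_eq]
  obtain hd | hd := hv.degree_eq_two_or_three (pathGraph_five_free_link hfree u) <;>
    rw [hd] at hx ⊢ <;> push_cast at hx ⊢ <;> linarith

theorem IsPerronVector.three_halves_le_charge_add_charge (h : IsPerronVector G ρ x u)
    (hρ : 10 ≤ ρ) (hfree : ¬ContainsSub theta133 G) (hpq : (link G u).Adj p q)
    (hp : IsLeaflessCore (link G u) p) (hq : IsLeaflessCore (link G u) q) :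
    3 / 2 ≤ charge (link G u) x p + 7 / 10 * degreeIn G (Gᶜ.neighborFinset u) p +
      (charge (link G u) x q + 7 / 10 * degreeIn G (Gᶜ.neighborFinset u) q) := by
  have h5 := pathGraph_five_free_link hfree u
  have hxp := h.ten_mul_le_degree_link_add hρ hpq
  have hxq := h.ten_mul_le_degree_link_add hρ hpq.symm
  have hDp : (0 : ℝ) ≤ degreeIn G (Gᶜ.neighborFinset u) p := Nat.cast_nonneg _
  have hDq : (0 : ℝ) ≤ degreeIn G (Gᶜ.neighborFinset u) q := Nat.cast_nonneg _
  rw [hp.charge_eq, hq.charge_eq]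
  obtain hdp | hdp := hp.degree_eq_two_or_three h5 <;>
    obtain hdq | hdq := hq.degree_eq_two_or_three h5 <;>
    rw [hdp] at hxp ⊢ <;> rw [hdq] at hxq ⊢ <;> push_cast at hxp hxq ⊢ <;> linarith

end CoreFree

section DoubleStar

variable {V : Type*} {L : SimpleGraph V} {c d v y : V}

/-- `L` is a double star with the adjacent centres `c` and `d`, together with any number of isolated
vertices. -/
structure IsDoubleStar (L : SimpleGraph V) (c d : V) : Prop where
  adj : L.Adj c d
  neighborSet_eq (y : V) (hc : y ≠ c) (hd : y ≠ d) :
    L.neighborSet y = ∅ ∨ L.neighborSet y = {c} ∨ L.neighborSet y = {d}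

theorem IsDoubleStar.symm (h : IsDoubleStar L c d) : IsDoubleStar L d c :=
  ⟨h.adj.symm, fun y hd hc => (h.neighborSet_eq y hc hd).imp_right Or.symm⟩

variable [Fintype V] [DecidableRel L.Adj] {x : V → ℝ}

theorem half_le_charge (hcore : coreDegree L v ≤ 1) (hx : x v ≤ 1) (hv : 2 ≤ L.degree v) :
    1 / 2 ≤ charge L x v := by
  have hc : (coreDegree L v : ℝ) ≤ 1 := by exact_mod_cast hcore
  linarith [one_sub_coreDegree_div_two_le_charge hv hx]

theorem half_le_charge_of_adj (hvy : L.Adj v y) (hv : L.degree v = 1) (hy : L.degree y = 1) :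
    1 / 2 ≤ charge L x v := by
  have hl : (1 : ℝ) ≤ leafDegree L v := by exact_mod_cast leafDegree_pos hvy hy
  rw [charge_of_degree_eq_one hv]
  gcongr

theorem exists_adj_one_le_charge_add_charge_of_two_le_degree (hcore : ∀ v, coreDegree L v ≤ 1)
    (h0 : ∀ v, 0 ≤ x v) (h1 : ∀ v, x v ≤ 1) (hv : 2 ≤ L.degree v) :
    ∃ c d, L.Adj c d ∧ 1 ≤ charge L x c + charge L x d := by
  by_cases hcv : coreDegree L v = 0
  · obtain ⟨y, hy⟩ := (L.degree_pos_iff_exists_adj v).1 (zero_lt_two.trans_le hv)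
    have hcharge := one_sub_coreDegree_div_two_le_charge hv (h1 v)
    rw [hcv, Nat.cast_zero, zero_div, sub_zero] at hcharge
    exact ⟨v, y, hy, le_add_of_le_of_nonneg hcharge <|
      charge_nonneg (h0 y) (h1 y) fun _ => (hcore y).trans one_le_two⟩
  · obtain ⟨y, hy⟩ := Finset.card_ne_zero.1 hcv
    rw [Finset.mem_filter, mem_neighborFinset] at hy
    have hy2 : 2 ≤ L.degree y := by
      have := (L.degree_pos_iff_exists_adj y).2 ⟨v, hy.1.symm⟩
      lia
    exact ⟨v, y, hy.1, by
      linarith [half_le_charge (hcore v) (h1 v) hv, half_le_charge (hcore y) (h1 y) hy2]⟩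

theorem exists_adj_one_le_charge_add_charge (hcore : ∀ v, coreDegree L v ≤ 1)
    (h0 : ∀ v, 0 ≤ x v) (h1 : ∀ v, x v ≤ 1) (hvy : L.Adj v y) :
    ∃ c d, L.Adj c d ∧ 1 ≤ charge L x c + charge L x d := by
  by_cases! hbig : ∃ z, 2 ≤ L.degree z
  · obtain ⟨z, hz⟩ := hbig
    exact exists_adj_one_le_charge_add_charge_of_two_le_degree hcore h0 h1 hz
  · have hone {a b : V} (hab : L.Adj a b) : L.degree a = 1 := by
      have := (L.degree_pos_iff_exists_adj a).2 ⟨b, hab⟩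
      have := hbig a
      lia
    have hv := hone hvy
    have hy := hone hvy.symm
    exact ⟨v, y, hvy, by
      linarith [half_le_charge_of_adj (x := x) hvy hv hy,
        half_le_charge_of_adj (x := x) hvy.symm hy hv]⟩

theorem isDoubleStar_of_charge_lt (hcore : ∀ v, coreDegree L v ≤ 1) (h1 : ∀ v, x v ≤ 1)
    (hcd : L.Adj c d)
    (hlt : ∀ y, y ≠ c → y ≠ d → L.degree y ≠ 0 → charge L x y < 1 / 2) : IsDoubleStar L c d := by
  have hone {y z : V} (hc : y ≠ c) (hd : y ≠ d) (hyz : L.Adj y z) : L.degree y = 1 := by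
    have hpos := (L.degree_pos_iff_exists_adj y).2 ⟨z, hyz⟩
    by_contra hne
    exact (hlt y hc hd hpos.ne').not_ge (half_le_charge (hcore y) (h1 y) (by lia))
  refine ⟨hcd, fun y hc hd => ?_⟩
  obtain hempty | ⟨z, hyz⟩ := (L.neighborSet y).eq_empty_or_nonempty
  · exact Or.inl hempty
  have hy1 := hone hc hd hyz
  have hz : z = c ∨ z = d := by
    by_contra! hz
    refine (hlt y hc hd (by lia)).not_ge (half_le_charge_of_adj hyz hy1 ?_)
    exact hone hz.1 hz.2 hyz.symm
  have hsingle : L.neighborSet y = {z} :=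
    Set.eq_singleton_iff_unique_mem.2 ⟨hyz, fun _ h => eq_of_adj_of_degree_eq_one hy1 h hyz⟩
  obtain rfl | rfl := hz
  · exact Or.inr (Or.inl hsingle)
  · exact Or.inr (Or.inr hsingle)

end DoubleStar

section LinkDoubleStar

variable {V : Type} [Fintype V] {G : SimpleGraph V} [DecidableRel G.Adj] {ρ : ℝ} {x : V → ℝ}
  {u v w c d : V}

theorem IsPerronVector.coreDegree_link_le_one (h : IsPerronVector G ρ x u) (hρ : 10 ≤ ρ)
    (hfree : ¬ContainsSub theta133 G) (hdeficit : G.edgeFinset.card - ρ ^ 2 + ρ < 3 / 2) (v : V) :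
    coreDegree (link G u) v ≤ 1 := by
  classical
  by_contra! hcore
  have h5 := pathGraph_five_free_link hfree u
  obtain ⟨p, q, hpq, hp, hq⟩ := exists_adj_isLeaflessCore h5 hcore
  let Q := (G.neighborFinset u).filter (IsLeaflessCore (link G u))
  have hQ (y : V) (hy : y ∈ Q) : IsLeaflessCore (link G u) y := (Finset.mem_filter.1 hy).2
  have hpQ : p ∈ Q := Finset.mem_filter.2 ⟨(G.mem_neighborFinset u p).2 hpq.2.1, hp⟩
  have hqQ : q ∈ Q := Finset.mem_filter.2 ⟨(G.mem_neighborFinset u q).2 hpq.2.2, hq⟩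
  refine hdeficit.not_ge ?_
  calc (3 / 2 : ℝ)
      ≤ charge (link G u) x p + 7 / 10 * degreeIn G (Gᶜ.neighborFinset u) p +
          (charge (link G u) x q + 7 / 10 * degreeIn G (Gᶜ.neighborFinset u) q) :=
        h.three_halves_le_charge_add_charge hρ hfree hpq hp hq
    _ ≤ ∑ y ∈ Q, (charge (link G u) x y + 7 / 10 * degreeIn G (Gᶜ.neighborFinset u) y) :=
        Finset.add_le_sum (fun y hy => h.charge_add_nonneg hρ hfree (hQ y hy)) hpQ hqQ hpq.ne
    _ ≤ ∑ y ∈ G.neighborFinset u, charge (link G u) x y +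
          ∑ w ∈ Gᶜ.neighborFinset u, outerCharge G u x w := by
        rw [Finset.sum_add_distrib]
        refine add_le_add ?_ (h.sum_mul_degreeIn_le_sum_outerCharge hρ hfree hQ)
        refine Finset.sum_le_sum_of_subset_of_nonneg (Finset.filter_subset _ _) fun y hy hyQ => ?_
        exact charge_nonneg_of_not_isLeaflessCore h5 (h.nonneg y) (h.le_one y)
          fun hyc => hyQ (Finset.mem_filter.2 ⟨hy, hyc⟩)
    _ = G.edgeFinset.card - ρ ^ 2 + ρ := h.sum_charge_add_sum_outerCharge

theorem IsPerronVector.exists_link_adj (h : IsPerronVector G ρ x u)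
    (hdeficit : G.edgeFinset.card - ρ ^ 2 + ρ < ρ) : ∃ v y, (link G u).Adj v y := by
  classical
  by_contra! hno
  refine hdeficit.not_ge ?_
  calc ρ = ∑ v ∈ G.neighborFinset u, x v := h.eigenvalue_eq
    _ = ∑ v ∈ G.neighborFinset u, charge (link G u) x v :=
        Finset.sum_congr rfl fun v _ =>
          (charge_of_degree_eq_zero (((link G u).degree_eq_zero v).2 (hno v))).symm
    _ ≤ ∑ v ∈ G.neighborFinset u, charge (link G u) x v +
          ∑ w ∈ Gᶜ.neighborFinset u, outerCharge G u x w :=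
        le_add_of_nonneg_right (Finset.sum_nonneg fun w _ => h.outerCharge_nonneg w)
    _ = G.edgeFinset.card - ρ ^ 2 + ρ := h.sum_charge_add_sum_outerCharge

theorem IsPerronVector.sum_charge_sdiff_add_sum_outerCharge_lt [DecidableEq V]
    (h : IsPerronVector G ρ x u)
    (hdeficit : G.edgeFinset.card - ρ ^ 2 + ρ < 3 / 2) (hcd : (link G u).Adj c d)
    (hcharge : 1 ≤ charge (link G u) x c + charge (link G u) x d) :
    ∑ v ∈ G.neighborFinset u \ {c, d}, charge (link G u) x v +
      ∑ w ∈ Gᶜ.neighborFinset u, outerCharge G u x w < 1 / 2 := by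
  have hsub : {c, d} ⊆ G.neighborFinset u := by
    simp [Finset.insert_subset_iff, hcd.2.1, hcd.2.2]
  have htotal := h.sum_charge_add_sum_outerCharge
  rw [← Finset.sum_sdiff hsub, Finset.sum_pair hcd.ne] at htotal
  linarith

theorem IsPerronVector.exists_isDoubleStar_link (h : IsPerronVector G ρ x u)
    (hcore : ∀ v, coreDegree (link G u) v ≤ 1) (hρ : 10 ≤ ρ)
    (hdeficit : G.edgeFinset.card - ρ ^ 2 + ρ < 3 / 2) :
    ∃ c d, IsDoubleStar (link G u) c d ∧ 1 ≤ charge (link G u) x c + charge (link G u) x d := by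
  classical
  obtain ⟨a, b, hab⟩ := h.exists_link_adj (by linarith)
  obtain ⟨c, d, hcd, hcharge⟩ := exists_adj_one_le_charge_add_charge hcore h.nonneg h.le_one hab
  refine ⟨c, d, isDoubleStar_of_charge_lt hcore h.le_one hcd fun y hc hd hy => ?_, hcharge⟩
  have hyu : G.Adj u y := by
    contrapose! hy
    exact degree_link_eq_zero hy
  have hlt := h.sum_charge_sdiff_add_sum_outerCharge_lt hdeficit hcd hcharge
  have hle := Finset.single_le_sum (f := charge (link G u) x) (s := G.neighborFinset u \ {c, d})
    (fun v _ => charge_nonneg (h.nonneg v) (h.le_one v) fun _ => (hcore v).trans one_le_two)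
    (a := y) (by simp [hyu, hc, hd])
  linarith [Finset.sum_nonneg fun w (_ : w ∈ Gᶜ.neighborFinset u) => h.outerCharge_nonneg w]

variable [DecidableEq V]

theorem IsPerronVector.degreeIn_compl_eq_zero_of_outerCharge_lt (h : IsPerronVector G ρ x u)
    (hlt : outerCharge G u x w < 1 / 2) : degreeIn G (Gᶜ.neighborFinset u) w = 0 := by
  have hA := mul_nonneg (Nat.cast_nonneg (α := ℝ) (degreeIn G (G.neighborFinset u) w))
    (sub_nonneg.2 (h.le_one w))
  unfold outerCharge at hlt
  have : (degreeIn G (Gᶜ.neighborFinset u) w : ℝ) < 1 := by linarith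
  exact Nat.lt_one_iff.1 (by exact_mod_cast this)

theorem IsPerronVector.four_le_degreeIn_of_outerCharge_lt (h : IsPerronVector G ρ x u)
    (hρ : 10 ≤ ρ) (hw : w ∈ Gᶜ.neighborFinset u) (hdeg : G.degree w ≠ 0)
    (hlt : outerCharge G u x w < 1 / 2) : 4 ≤ degreeIn G (G.neighborFinset u) w := by
  by_contra! hA
  have hle := h.seven_tenths_mul_le_outerCharge hρ hw (Nat.le_of_lt_succ hA)
  have hA1 : (degreeIn G (G.neighborFinset u) w : ℝ) < 1 := by linarith
  have hA0 : degreeIn G (G.neighborFinset u) w = 0 := Nat.lt_one_iff.1 (by exact_mod_cast hA1)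
  refine hdeg (Nat.cast_eq_zero (R := ℝ) |>.1 ?_)
  rw [degree_eq_ite_add_degreeIn_add_degreeIn G u w, hA0,
    h.degreeIn_compl_eq_zero_of_outerCharge_lt hlt,
    if_neg fun hwu => ((Gᶜ.mem_neighborFinset u w).1 hw).2 hwu.symm]
  simp

theorem IsDoubleStar.degree_link_eq_zero_of_adj (hstar : IsDoubleStar (link G u) c d)
    (hfree : ¬ContainsSub theta133 G) (hw : w ∈ Gᶜ.neighborFinset u)
    (hA : 4 ≤ degreeIn G (G.neighborFinset u) w) (hwv : G.Adj w v) (hc : v ≠ c) (hd : v ≠ d) :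
    (link G u).degree v = 0 := by
  obtain ⟨hwu, huw⟩ := (Gᶜ.mem_neighborFinset u w).1 hw
  have hbound {p q : V} (hvp : (link G u).Adj v p) (hpq : (link G u).Adj p q) (hvq : v ≠ q) :
      False :=
    absurd (degreeIn_neighborFinset_le_three hfree hwu.symm huw hwv hvp hpq hvq) (by lia)
  rw [degree_eq_zero]
  intro y hvy
  obtain h | h | h := hstar.neighborSet_eq v hc hd
  · exact (h ▸ hvy : y ∈ (∅ : Set V))
  · obtain rfl : y = c := (h ▸ hvy : y ∈ ({c} : Set V))
    exact hbound hvy hstar.adj hd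
  · obtain rfl : y = d := (h ▸ hvy : y ∈ ({d} : Set V))
    exact hbound hvy hstar.adj.symm hc

theorem IsPerronVector.sum_le_two_add_sum_charge (h : IsPerronVector G ρ x u)
    (hcore : ∀ v, coreDegree (link G u) v ≤ 1) (hstar : IsDoubleStar (link G u) c d)
    (hfree : ¬ContainsSub theta133 G) (hw : w ∈ Gᶜ.neighborFinset u)
    (hA : 4 ≤ degreeIn G (G.neighborFinset u) w) :
    ∑ v ∈ G.neighborFinset u with G.Adj w v, x v ≤
      2 + ∑ v ∈ G.neighborFinset u \ {c, d}, charge (link G u) x v := by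
  have hsub : {c, d} ⊆ G.neighborFinset u := by
    simp [Finset.insert_subset_iff, hstar.adj.2.1, hstar.adj.2.2]
  rw [Finset.sum_filter, ← Finset.sum_sdiff hsub, add_comm]
  refine add_le_add ?_ (Finset.sum_le_sum fun v hv => ?_)
  · have hle (y : V) : (if G.Adj w y then x y else 0) ≤ 1 := by
      split_ifs
      exacts [h.le_one y, zero_le_one]
    rw [Finset.sum_pair hstar.adj.ne]
    linarith [hle c, hle d]
  · split_ifs with hwv
    · have hvcd : v ≠ c ∧ v ≠ d := by simpa using (Finset.mem_sdiff.1 hv).2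
      rw [charge_of_degree_eq_zero
        (hstar.degree_link_eq_zero_of_adj hfree hw hA hwv hvcd.1 hvcd.2)]
    · exact charge_nonneg (h.nonneg v) (h.le_one v) fun _ => (hcore v).trans one_le_two

theorem IsPerronVector.neighborFinset_compl_eq_empty (h : IsPerronVector G ρ x u)
    (hcore : ∀ v, coreDegree (link G u) v ≤ 1) (hρ : 10 ≤ ρ)
    (hdeficit : G.edgeFinset.card - ρ ^ 2 + ρ < 3 / 2) (hfree : ¬ContainsSub theta133 G)
    (hstar : IsDoubleStar (link G u) c d)
    (hcharge : 1 ≤ charge (link G u) x c + charge (link G u) x d) (hdeg : ∀ v, G.degree v ≠ 0) :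
    Gᶜ.neighborFinset u = ∅ := by
  refine Finset.eq_empty_of_forall_notMem fun w hw => ?_
  have hbudget := h.sum_charge_sdiff_add_sum_outerCharge_lt hdeficit hstar.adj hcharge
  have hrest : 0 ≤ ∑ v ∈ G.neighborFinset u \ {c, d}, charge (link G u) x v :=
    Finset.sum_nonneg fun v _ =>
      charge_nonneg (h.nonneg v) (h.le_one v) fun _ => (hcore v).trans one_le_two
  have houter : outerCharge G u x w < 1 / 2 := by
    have := Finset.single_le_sum (fun w _ => h.outerCharge_nonneg w) hw
    linarith
  have hA := h.four_le_degreeIn_of_outerCharge_lt hρ hw (hdeg w) houter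
  have hW := h.degreeIn_compl_eq_zero_of_outerCharge_lt houter
  have hxw : 1 / 2 < x w := by
    have hA' : (4 : ℝ) ≤ degreeIn G (G.neighborFinset u) w := by exact_mod_cast hA
    have := mul_le_mul_of_nonneg_right hA' (sub_nonneg.2 (h.le_one w))
    rw [outerCharge, hW] at houter
    norm_num at houter
    linarith
  have heigen : ρ * x w = ∑ v ∈ G.neighborFinset u with G.Adj w v, x v := by
    rw [← h.sum_neighborFinset, sum_neighborFinset_eq_ite_add_sum_filter_add_sum_filter G u w,
      if_neg fun hwu => ((Gᶜ.mem_neighborFinset u w).1 hw).2 hwu.symm, Finset.card_eq_zero.1 hW]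
    simp
  have hupper := h.sum_le_two_add_sum_charge hcore hstar hfree hw hA
  have houter_nonneg := Finset.sum_nonneg fun w (_ : w ∈ Gᶜ.neighborFinset u) =>
    h.outerCharge_nonneg w
  linarith [mul_le_mul_of_nonneg_right hρ (h.nonneg w)]

end LinkDoubleStar

section StarLeaves

variable {V : Type*} [Fintype V] [DecidableEq V] {L : SimpleGraph V} [DecidableRel L.Adj]
  {c d y : V}

/-- The neighbours of the centre `c` of a double star other than the second centre `d`. -/
def starLeaves (L : SimpleGraph V) [DecidableRel L.Adj] (c d : V) : Finset V :=
  (L.neighborFinset c).erase d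

theorem mem_starLeaves : y ∈ starLeaves L c d ↔ y ≠ d ∧ L.Adj c y := by
  rw [starLeaves, Finset.mem_erase, mem_neighborFinset]

theorem IsDoubleStar.neighborFinset_of_mem_starLeaves (h : IsDoubleStar L c d)
    (hy : y ∈ starLeaves L c d) : L.neighborFinset y = {c} := by
  obtain ⟨hd, hcy⟩ := mem_starLeaves.1 hy
  have hmem : c ∈ L.neighborSet y := hcy.symm
  ext z
  rw [mem_neighborFinset, ← mem_neighborSet, Finset.mem_singleton]
  obtain hs | hs | hs := h.neighborSet_eq y hcy.ne' hd
  · simp [hs] at hmem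
  · simp [hs]
  · rw [hs] at hmem
    exact absurd hmem h.adj.ne

theorem IsDoubleStar.sum_neighborFinset (h : IsDoubleStar L c d) (f : V → ℝ) :
    ∑ y ∈ L.neighborFinset c, f y = f d + ∑ y ∈ starLeaves L c d, f y :=
  (Finset.add_sum_erase _ f ((L.mem_neighborFinset c d).2 h.adj)).symm

theorem IsDoubleStar.degree_eq (h : IsDoubleStar L c d) :
    (L.degree c : ℝ) = 1 + (starLeaves L c d).card := by
  simpa using h.sum_neighborFinset fun _ => 1

theorem IsDoubleStar.degree_of_mem_starLeaves (h : IsDoubleStar L c d)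
    (hy : y ∈ starLeaves L c d) : L.degree y = 1 := by
  rw [← card_neighborFinset_eq_degree, h.neighborFinset_of_mem_starLeaves hy,
    Finset.card_singleton]

theorem IsDoubleStar.mem_cases (h : IsDoubleStar L c d) (y : V) :
    y = c ∨ y = d ∨ y ∈ starLeaves L c d ∨ y ∈ starLeaves L d c ∨ L.degree y = 0 := by
  by_cases hc : y = c
  · exact Or.inl hc
  by_cases hd : y = d
  · exact Or.inr (Or.inl hd)
  obtain hs | hs | hs := h.neighborSet_eq y hc hd
  · exact .inr <| .inr <| .inr <| .inr <| (L.degree_eq_zero y).2 (L.neighborSet_eq_empty.1 hs)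
  · have hyc : L.Adj y c := hs.ge <| Set.mem_singleton c
    exact .inr <| .inr <| .inl <| mem_starLeaves.2 ⟨hd, hyc.symm⟩
  · have hyd : L.Adj y d := hs.ge <| Set.mem_singleton d
    exact .inr <| .inr <| .inr <| .inl <| mem_starLeaves.2 ⟨hc, hyd.symm⟩

theorem IsDoubleStar.sum_eq (h : IsDoubleStar L c d) {S : Finset V}
    (hS : ∀ y z, L.Adj y z → y ∈ S) (f : V → ℝ) :
    ∑ y ∈ S, f y = f c + f d + ∑ y ∈ starLeaves L c d, f y + ∑ y ∈ starLeaves L d c, f y +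
      ∑ y ∈ S with L.degree y = 0, f y := by
  have hpos {y z : V} (hyz : L.Adj y z) : L.degree y ≠ 0 :=
    ((L.degree_pos_iff_exists_adj y).2 ⟨z, hyz⟩).ne'
  have hsplit : S = {c, d} ∪ starLeaves L c d ∪ starLeaves L d c ∪ S.filter (L.degree · = 0) := by
    ext y
    have := h.mem_cases y
    have := h.adj
    grind [mem_starLeaves, SimpleGraph.adj_comm]
  have hdisj : Disjoint (starLeaves L c d) (starLeaves L d c) := by
    refine Finset.disjoint_left.2 fun y hy hy' => h.adj.ne ?_
    rw [← Finset.singleton_inj, ← h.neighborFinset_of_mem_starLeaves hy,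
      h.symm.neighborFinset_of_mem_starLeaves hy']
  conv_lhs => rw [hsplit]
  rw [Finset.sum_union, Finset.sum_union, Finset.sum_union, Finset.sum_pair h.adj.ne]
  all_goals
    rw [Finset.disjoint_left] at *
    have := h.adj
    grind [mem_starLeaves, SimpleGraph.adj_comm, SimpleGraph.Adj.ne]

end StarLeaves

section Finish

theorem sub_one_mul_eq_of_star_equations {a b s ρ y z A B S : ℝ} (hA : ρ * A = a * (1 + y))
    (hB : ρ * B = b * (1 + z)) (hS : ρ * S = s) (hy : ρ * y = 1 + z + A)
    (hz : ρ * z = 1 + y + B) (hρ : ρ = y + z + A + B + S) :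
    (3 + 2 * (a + b) + s - ρ ^ 2 + ρ - 1) * (ρ * (ρ + 1)) =
      a * b * (2 + y + z) + (a + b) * s + s * (ρ + 1) := by
  have hy' : (1 - y) * (ρ * (ρ + 1)) = b * (1 + z) + s := by
    linear_combination ρ * hρ - ρ * hy + hB + hS
  have hz' : (1 - z) * (ρ * (ρ + 1)) = a * (1 + y) + s := by
    linear_combination ρ * hρ - ρ * hz + hA + hS
  have hdeficit : (3 + 2 * (a + b) + s - ρ ^ 2 + ρ - 1) * ρ =
      (a * (1 - y) + b * (1 - z)) * ρ + s := by
    linear_combination (1 - ρ) * (ρ * hρ + hA + hB + hS) - (ρ * hy + hA) - (ρ * hz + hB)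
  linear_combination (ρ + 1) * hdeficit + a * hy' + b * hz'

theorem eq_one_and_eq_zero_or_eq_zero {a b s : ℕ} {ρ : ℝ} (hρ : 10 ≤ ρ) (hs : Odd s)
    (hlower : ρ ^ 2 - ρ + 1 ≤ 3 + 2 * (a + b) + s)
    (hupper : 2 * (a * b) + (a + b) * s + s * (ρ + 1) < ρ * (ρ + 1) / 2) :
    s = 1 ∧ (a = 0 ∨ b = 0) := by
  have hsρ : (s : ℝ) < ρ / 2 := by
    have hab : (0 : ℝ) ≤ 2 * (a * b) + (a + b) * s := by positivity
    refine lt_of_mul_lt_mul_right (?_ : s * (ρ + 1) < ρ / 2 * (ρ + 1)) (by linarith)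
    linarith
  have hρ2 : 10 * ρ ≤ ρ * ρ := mul_le_mul_of_nonneg_right hρ (by linarith)
  have hs1 : s = 1 := by
    by_contra hne
    have hs3 : (3 : ℝ) ≤ s := by
      obtain ⟨k, hk⟩ := hs
      exact_mod_cast (by lia : 3 ≤ s)
    have hab : (0 : ℝ) ≤ a * b := by positivity
    have := mul_le_mul_of_nonneg_left hs3 (by positivity : (0 : ℝ) ≤ a + b)
    have := mul_le_mul_of_nonneg_right hs3 (by linarith : 0 ≤ ρ + 1)
    linarith
  refine ⟨hs1, ?_⟩
  by_contra! hne
  have ha : (1 : ℝ) ≤ a := by exact_mod_cast Nat.one_le_iff_ne_zero.2 hne.1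
  have hb : (1 : ℝ) ≤ b := by exact_mod_cast Nat.one_le_iff_ne_zero.2 hne.2
  have hab := mul_nonneg (sub_nonneg.2 ha) (sub_nonneg.2 hb)
  rw [hs1, Nat.cast_one] at hlower hupper
  linarith

end Finish

section Extremal

variable {V : Type*} [Fintype V] [DecidableEq V] {G : SimpleGraph V} [DecidableRel G.Adj]
  {ρ : ℝ} {x : V → ℝ} {u v c d i : V}

/-- The isolated vertices of the link of `u`. -/
def isolatedNeighbors (G : SimpleGraph V) [DecidableRel G.Adj] (u : V) : Finset V :=
  (G.neighborFinset u).filter ((link G u).degree · = 0)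

theorem IsDoubleStar.sum_neighborFinset_eq (hstar : IsDoubleStar (link G u) c d) (f : V → ℝ) :
    ∑ v ∈ G.neighborFinset u, f v = f c + f d + ∑ v ∈ starLeaves (link G u) c d, f v +
      ∑ v ∈ starLeaves (link G u) d c, f v + ∑ v ∈ isolatedNeighbors G u, f v :=
  hstar.sum_eq (fun y _ hyz => (G.mem_neighborFinset u y).2 hyz.2.1) f

theorem IsDoubleStar.card_edgeFinset_eq (hstar : IsDoubleStar (link G u) c d)
    (hW : Gᶜ.neighborFinset u = ∅) :
    G.edgeFinset.card = 3 + 2 * ((starLeaves (link G u) c d).card +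
      (starLeaves (link G u) d c).card) + (isolatedNeighbors G u).card := by
  have hleaves {a b : V} (h : IsDoubleStar (link G u) a b) :
      ∑ v ∈ starLeaves (link G u) a b, (2 + (link G u).degree v : ℝ) =
        (starLeaves (link G u) a b).card * 3 := by
    rw [← nsmul_eq_mul, ← Finset.sum_const]
    refine Finset.sum_congr rfl fun v hv => ?_
    rw [h.degree_of_mem_starLeaves hv]
    norm_num
  have hisolated : ∑ v ∈ isolatedNeighbors G u, (2 + (link G u).degree v : ℝ) =
      (isolatedNeighbors G u).card * 2 := by
    rw [← nsmul_eq_mul, ← Finset.sum_const]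
    refine Finset.sum_congr rfl fun v hv => ?_
    rw [(Finset.mem_filter.1 hv).2, Nat.cast_zero, add_zero]
  have hedges := two_mul_card_edgeFinset_eq G u
  rw [hW, Finset.sum_empty, add_zero, Finset.sum_congr rfl fun v hv => by
    rw [← degree_link ((G.mem_neighborFinset u v).1 hv)]] at hedges
  rw [hstar.sum_neighborFinset_eq, hleaves hstar, hleaves hstar.symm, hisolated, hstar.degree_eq,
    hstar.symm.degree_eq] at hedges
  rify
  linarith

theorem IsDoubleStar.card_eq (hstar : IsDoubleStar (link G u) c d)
    (hW : Gᶜ.neighborFinset u = ∅) :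
    Fintype.card V = 3 + ((starLeaves (link G u) c d).card +
      (starLeaves (link G u) d c).card) + (isolatedNeighbors G u).card := by
  have hcard := sum_univ_eq_add_sum_neighborFinset_add_sum_compl G u 1
  rw [hstar.sum_neighborFinset_eq, hW, Finset.sum_empty] at hcard
  simp only [Pi.one_apply, Finset.sum_const, Finset.card_univ, nsmul_eq_mul, mul_one] at hcard
  rify
  linarith

theorem IsPerronVector.mul_eq_one_add_sum_link (h : IsPerronVector G ρ x u)
    (hW : Gᶜ.neighborFinset u = ∅) (hv : G.Adj u v) :
    ρ * x v = 1 + ∑ y ∈ (link G u).neighborFinset v, x y := by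
  have hlink : (link G u).neighborFinset v = (G.neighborFinset u).filter (G.Adj v) := by
    ext y
    simp [link_adj, hv, and_comm]
  rw [← h.sum_neighborFinset, sum_neighborFinset_eq_ite_add_sum_filter_add_sum_filter G u v,
    if_pos hv.symm, h.apply_eq_one, hW, hlink, Finset.filter_empty, Finset.sum_empty, add_zero]

theorem IsPerronVector.mul_sum_starLeaves (h : IsPerronVector G ρ x u)
    (hW : Gᶜ.neighborFinset u = ∅) (hstar : IsDoubleStar (link G u) c d) :
    ρ * ∑ v ∈ starLeaves (link G u) c d, x v = (starLeaves (link G u) c d).card * (1 + x c) := by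
  rw [Finset.mul_sum, ← nsmul_eq_mul, ← Finset.sum_const]
  refine Finset.sum_congr rfl fun v hv => ?_
  rw [h.mul_eq_one_add_sum_link hW (mem_starLeaves.1 hv).2.2.2,
    hstar.neighborFinset_of_mem_starLeaves hv, Finset.sum_singleton]

theorem IsPerronVector.mul_sum_isolatedNeighbors (h : IsPerronVector G ρ x u)
    (hW : Gᶜ.neighborFinset u = ∅) :
    ρ * ∑ v ∈ isolatedNeighbors G u, x v = (isolatedNeighbors G u).card := by
  rw [Finset.mul_sum, Finset.card_eq_sum_ones, Nat.cast_sum]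
  refine Finset.sum_congr rfl fun v hv => ?_
  obtain ⟨huv, hdeg⟩ := Finset.mem_filter.1 hv
  rw [h.mul_eq_one_add_sum_link hW ((G.mem_neighborFinset u v).1 huv),
    Finset.card_eq_zero.1 (((link G u).card_neighborFinset_eq_degree v).trans hdeg),
    Finset.sum_empty, add_zero, Nat.cast_one]

theorem IsPerronVector.mul_center (h : IsPerronVector G ρ x u) (hW : Gᶜ.neighborFinset u = ∅)
    (hstar : IsDoubleStar (link G u) c d) :
    ρ * x c = 1 + x d + ∑ v ∈ starLeaves (link G u) c d, x v := by
  rw [h.mul_eq_one_add_sum_link hW hstar.adj.2.1, hstar.sum_neighborFinset, add_assoc]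

theorem IsPerronVector.card_isolatedNeighbors_eq_one (h : IsPerronVector G ρ x u) (hρ : 10 ≤ ρ)
    (hdeficit : G.edgeFinset.card - ρ ^ 2 + ρ < 3 / 2) (heven : Even G.edgeFinset.card)
    (hW : Gᶜ.neighborFinset u = ∅) (hstar : IsDoubleStar (link G u) c d) :
    (isolatedNeighbors G u).card = 1 ∧
      ((starLeaves (link G u) c d).card = 0 ∨ (starLeaves (link G u) d c).card = 0) := by
  have hsum := sub_one_mul_eq_of_star_equations (h.mul_sum_starLeaves hW hstar)
    (h.mul_sum_starLeaves hW hstar.symm) (h.mul_sum_isolatedNeighbors hW)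
    (h.mul_center hW hstar) (h.mul_center hW hstar.symm)
    (h.eigenvalue_eq.trans (hstar.sum_neighborFinset_eq x))
  have hcard := hstar.card_edgeFinset_eq hW
  set a := (starLeaves (link G u) c d).card
  set b := (starLeaves (link G u) d c).card
  set s := (isolatedNeighbors G u).card
  have hodd : Odd s := by
    rw [hcard] at heven
    grind
  rw [hcard] at hdeficit
  push_cast at hdeficit
  have hρ2 : 0 < ρ * (ρ + 1) := by positivity
  have hnonneg := mul_nonneg (mul_nonneg a.cast_nonneg b.cast_nonneg)
    (add_nonneg (h.nonneg c) (h.nonneg d))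
  refine eq_one_and_eq_zero_or_eq_zero hρ hodd ?_ ?_
  · have hright : (0 : ℝ) ≤ a * b * (2 + x c + x d) + (a + b) * s + s * (ρ + 1) := by
      have := h.nonneg c
      have := h.nonneg d
      positivity
    rw [← hsum] at hright
    linarith [nonneg_of_mul_nonneg_left hright hρ2]
  · have := mul_lt_mul_of_pos_right (sub_lt_sub_right hdeficit 1) hρ2
    linarith

theorem adj_of_neighborFinset_compl_eq_empty (hW : Gᶜ.neighborFinset u = ∅) (hv : v ≠ u) :
    G.Adj u v := by
  by_contra huv
  exact Finset.notMem_empty v (hW ▸ (Gᶜ.mem_neighborFinset u v).2 ⟨hv.symm, huv⟩)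

theorem IsDoubleStar.link_adj_of_ne (hstar : IsDoubleStar (link G u) c d)
    (hd : starLeaves (link G u) d c = ∅) (hi : isolatedNeighbors G u = {i}) (huv : G.Adj u v)
    (hvc : v ≠ c) (hvi : v ≠ i) : (link G u).Adj c v := by
  obtain h | rfl | h | h | h := hstar.mem_cases v
  · exact absurd h hvc
  · exact hstar.adj
  · exact (mem_starLeaves.1 h).2
  · simp [hd] at h
  · have hv : v ∈ isolatedNeighbors G u :=
      Finset.mem_filter.2 ⟨(G.mem_neighborFinset u v).2 huv, h⟩
    exact absurd (Finset.mem_singleton.1 (hi ▸ hv)) hvi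

theorem IsDoubleStar.isSMinus (hstar : IsDoubleStar (link G u) c d)
    (hW : Gᶜ.neighborFinset u = ∅) (hd : starLeaves (link G u) d c = ∅)
    (hi : isolatedNeighbors G u = {i}) : IsSMinus G u c i := by
  have hu {v : V} (hv : v ≠ u) : G.Adj u v := adj_of_neighborFinset_compl_eq_empty hW hv
  have hiso : G.Adj u i ∧ (link G u).degree i = 0 := by
    have := Finset.mem_singleton_self i
    rwa [← hi, isolatedNeighbors, Finset.mem_filter, mem_neighborFinset] at this
  have hic (v : V) : ¬(link G u).Adj i v := ((link G u).degree_eq_zero i).1 hiso.2 v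
  have hcenter {v : V} (hv : v ≠ u) (hvc : v ≠ c) (hvi : v ≠ i) : (link G u).Adj c v :=
    hstar.link_adj_of_ne hd hi (hu hv) hvc hvi
  have hleaf {y z : V} (hyz : (link G u).Adj y z) (hyc : y ≠ c) : z = c := by
    by_contra hzc
    obtain rfl | hyd := eq_or_ne y d
    · exact Finset.notMem_empty z (hd ▸ mem_starLeaves.2 ⟨hzc, hyz⟩)
    have hy : y ∈ starLeaves (link G u) c d := mem_starLeaves.2
      ⟨hyd, hcenter hyz.2.1.ne' hyc fun h => hic z (h ▸ hyz)⟩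
    have hz := (mem_neighborFinset _ y z).2 hyz
    rw [hstar.neighborFinset_of_mem_starLeaves hy, Finset.mem_singleton] at hz
    exact hzc hz
  refine ⟨hstar.adj.2.1.ne, hiso.1.ne', ?_, fun {y z} => ?_⟩
  · rintro rfl
    exact hic d hstar.adj
  · obtain rfl | hyu := eq_or_ne y u
    · grind [SimpleGraph.Adj.ne]
    obtain rfl | hzu := eq_or_ne z u
    · grind [SimpleGraph.Adj.ne, SimpleGraph.adj_comm]
    have hlink : G.Adj y z ↔ (link G u).Adj y z := by
      rw [link_adj, and_iff_left ⟨hu hyu, hu hzu⟩]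
    rw [hlink]
    grind [SimpleGraph.Adj.ne, SimpleGraph.adj_comm]

theorem IsDoubleStar.nonempty_iso_SminusG {t : ℕ} (hstar : IsDoubleStar (link G u) c d)
    (hW : Gᶜ.neighborFinset u = ∅) (hi : (isolatedNeighbors G u).card = 1)
    (hd : (starLeaves (link G u) d c).card = 0) (ht : G.edgeFinset.card = 2 * t) :
    Nonempty (G ≃g SminusG t) := by
  obtain ⟨i, hi'⟩ := Finset.card_eq_one.1 hi
  have hedges := hstar.card_edgeFinset_eq hW
  have hcard := hstar.card_eq hW
  have : NeZero t := ⟨by lia⟩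
  refine (hstar.isSMinus hW (Finset.card_eq_zero.1 hd) hi').nonempty_iso (isSMinus_SminusG t) ?_
  rw [Fintype.card_sum, Fintype.card_fin, Fintype.card_fin]
  lia

end Extremal

section Main

variable {V : Type} [Fintype V] {G : SimpleGraph V} [DecidableRel G.Adj] {ρ ρ' : ℝ} {t : ℕ}

theorem IsPerronVector.nonempty_iso_SminusG {x : V → ℝ} {u : V} (h : IsPerronVector G ρ x u)
    (hρ : 10 ≤ ρ) (hdeficit : G.edgeFinset.card - ρ ^ 2 + ρ < 3 / 2)
    (hfree : ¬ContainsSub theta133 G) (hdeg : ∀ v, G.degree v ≠ 0)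
    (ht : G.edgeFinset.card = 2 * t) : Nonempty (G ≃g SminusG t) := by
  classical
  have hcore := h.coreDegree_link_le_one hρ hfree hdeficit
  obtain ⟨c, d, hstar, hcharge⟩ := h.exists_isDoubleStar_link hcore hρ hdeficit
  have hW := h.neighborFinset_compl_eq_empty hcore hρ hdeficit hfree hstar hcharge hdeg
  obtain ⟨hi, hc | hd⟩ :=
    h.card_isolatedNeighbors_eq_one hρ hdeficit (ht ▸ even_two_mul t) hW hstar
  · exact hstar.symm.nonempty_iso_SminusG hW hi hc ht
  · exact hstar.nonempty_iso_SminusG hW hi hd ht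

theorem IsSpecRad.nonempty_iso_SminusG_of_le (h : IsSpecRad G ρ) (h' : IsSpecRad (SminusG t) ρ')
    (hle : ρ' ≤ ρ) (ht : 46 ≤ t) (hfree : ¬ContainsSub theta133 G) (hdeg : ∀ v, G.degree v ≠ 0)
    (hcard : G.edgeFinset.card = 2 * t) : Nonempty (G ≃g SminusG t) := by
  have hρ' : 1 ≤ ρ' := h'.one_le_of_SminusG
  have hlt : 2 * t - 3 / 2 < ρ ^ 2 - ρ := by
    have hmono : ρ' ^ 2 - ρ' ≤ ρ ^ 2 - ρ := by nlinarith
    exact (h'.lt_sq_sub_self_of_SminusG (by lia)).trans_le hmono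
  have hρ : 10 ≤ ρ := by
    have ht' : (46 : ℝ) ≤ t := by exact_mod_cast ht
    nlinarith
  obtain ⟨x, u, hx⟩ := h.exists_isPerronVector
  refine hx.nonempty_iso_SminusG hρ ?_ hfree hdeg hcard
  rw [hcard, Nat.cast_mul, Nat.cast_two]
  linarith

end Main

/-- main theorem: for even `m ≥ 92`, every `θ(1,3,3)`-free graph `G` with
`m` edges and no isolated vertices satisfies `ρ(G) ≤ ρ(S⁻_{(m+4)/2,2})`, with equality
iff `G ≅ S⁻_{(m+4)/2,2}`. -/
theorem main_theorem (m : ℕ) (hme : Even m) (hm : 92 ≤ m)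
    {V : Type} [Fintype V] (G : SimpleGraph V)
    (hfree : ¬ ContainsSub theta133 G) (hmG : G.edgeSet.ncard = m)
    (hiso : ∀ v : V, (G.neighborSet v).ncard ≠ 0)
    (ρ ρ' : ℝ) (hρ : IsSpecRad G ρ) (hρ' : IsSpecRad (SminusG (m / 2)) ρ') :
    ρ ≤ ρ' ∧ (ρ = ρ' ↔ Nonempty (G ≃g SminusG (m / 2))) := by
  classical
  have hm2 : m = 2 * (m / 2) := (Nat.two_mul_div_two_of_even hme).symm
  have hcard : G.edgeFinset.card = 2 * (m / 2) := by
    rw [← hm2, ← hmG, ← coe_edgeFinset, Set.ncard_coe_finset]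
  have hdeg (v : V) : G.degree v ≠ 0 := by
    rw [← card_neighborFinset_eq_degree, ← Set.ncard_coe_finset, coe_neighborFinset]
    exact hiso v
  have hextremal (hle : ρ' ≤ ρ) : Nonempty (G ≃g SminusG (m / 2)) :=
    hρ.nonempty_iso_SminusG_of_le hρ' hle (by lia) hfree hdeg hcard
  have hequal : Nonempty (G ≃g SminusG (m / 2)) → ρ = ρ' := fun ⟨e⟩ => hρ.eq_of_iso hρ' e
  exact ⟨(le_total ρ ρ').elim id fun hle => (hequal (hextremal hle)).le,
    fun h => hextremal h.ge, hequal⟩
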